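/- arXiv:1609.07604 — 2 statements merged into one kernel-verified Lean document; each statement's English description precedes it below -/
import Mathlib

section
/- Let G be a finite abelian group of order n with d = (n+√(n²+4))/2, and let (ε,η,A) satisfy equations (1)–(8) of the polynomial equations together with A_g(h,0) = δ_{h,0} − 1/(d−1) for all g,h ∈ G. Then for all g,p,q ∈ G, the instance of equation (9) with x = y = 0 holds if and only if |A_g(p,q)|² = δ_{p,0}·δ_{q,0} − (δ_{p,0} + δ_{q,0} + δ_{p,q})/(d−1) + d/(d−1)². -/
open scoped BigOperators
open Complex

/-- `d = (n + √(n²+4))/2` where `n` is the cardinality of `G`. -/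
noncomputable def dR (G : Type) [Fintype G] : ℝ :=
  ((Fintype.card G : ℝ) + Real.sqrt ((Fintype.card G : ℝ) ^ 2 + 4)) / 2

/-- The complex number `d`. -/
noncomputable def dC (G : Type) [Fintype G] : ℂ := ((dR G : ℝ) : ℂ)

/-- Equation (9) of the polynomial equations, at fixed parameters `g p q x y`. -/
def Eq9At {G : Type} [AddCommGroup G] [Fintype G] [DecidableEq G]
    (ε : G → G → ℂ) (η : G → ℂ) (A : G → G → G → ℂ) (g p q x y : G) : Prop :=
  ∑ l : G, A g (x + y) l * A (g - p + x) (-x) (l + p) * A (g - q + x + y) (-y) (l + q)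
    = η g * η (g + q + x) * η (g + p + q + y) *
        (starRingEnd ℂ) (η (g + p)) * (starRingEnd ℂ) (η (g + x + y)) *
        (starRingEnd ℂ) (η (g + q + x + y)) *
        ε p (g - p + x) * ε (p + x) (g - p + q + y) *
        ε q (g - q + x + y) * ε (q + y) (g - q + x) *
        A g (p + x) (q + x + y) * A (g - p) (q + y) (p + x + y)
      - (if x = (0 : G) then (1 : ℂ) else 0) * (if y = (0 : G) then (1 : ℂ) else 0) *
        η g * η (g + p) * η (g + q) / dC G

/-- Equations (1)–(8) of the polynomial equations for `(ε, η, A)` on a finite abelian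
group `G` (with `ε` taking values in `{1, −1}`). -/
structure PolyEqs1to8 {G : Type} [AddCommGroup G] [Fintype G] [DecidableEq G]
    (ε : G → G → ℂ) (η : G → ℂ) (A : G → G → G → ℂ) : Prop where
  eps_pm : ∀ h g : G, ε h g = 1 ∨ ε h g = -1
  eq1 : ∀ g h k : G, ε (h + k) g = ε h g * ε k (g + h + h)
  eq1' : ∀ h : G, ε h 0 = 1
  eq2 : ∀ g h : G, η (g + h + h) = η g
  eq2' : ∀ g : G, η g ^ 3 = 1
  eq3 : ∀ g : G, ∑ h : G, A g h 0 = -(starRingEnd ℂ) (η g) / dC G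
  eq4 : ∀ g g' k : G,
    ∑ h : G, A g (h - g) k * (starRingEnd ℂ) (A g' (h - g') k)
      = (if g = g' then (1 : ℂ) else 0)
        - (if k = (0 : G) then (1 : ℂ) else 0) * (starRingEnd ℂ) (η g) * η g' / dC G
  eq5 : ∀ g h p q : G,
    A (g + h + h) p q = ε h g * ε h (g + p) * ε h (g + q) * ε h (g + p + q) * A g p q
  eq6 : ∀ g h k : G, A g k h = (starRingEnd ℂ) (A g h k)
  eq7a : ∀ g h k : G,
    A g h k = η g * ε (-k) (g + h) * ε (-k) (g + k) * ε (-k) (g + h + k) * A g (-k) (h - k)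
  eq7b : ∀ g h k : G,
    A g h k = (starRingEnd ℂ) (η g) * ε (-h) (g + h) * ε (-h) (g + k) * ε (-h) (g + h + k) *
      A g (k - h) (-h)
  eq8a : ∀ g h k : G,
    A g h k = η g * η (g + k) * (starRingEnd ℂ) (η (g + h)) * (starRingEnd ℂ) (η (g + h + k)) *
      ε h g * ε h (g + k) * A (g + h) h k
  eq8b : ∀ g h k : G,
    A g h k = (starRingEnd ℂ) (η g) * (starRingEnd ℂ) (η (g + h)) * η (g + k) * η (g + h + k) *
      ε k g * ε k (g + h) * A (g + k) h k

/-! The number `d` is the positive root of `d² = n d + 1`. Summing the `Q`-system condition over `h`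
gives `-1/d`, so (3) forces `η = 1`. At `x = y = 0` the left side of (9) involves only the values
`A_g(0,h)`, which (6) and the `Q`-system condition determine; expanding the product of the three
factors `δ - 1/(d-1)` and using `n = d - 1/d` evaluates the sum. On the right side, (8) and (6) turn
`A_{g-p}(q,p)` into a sign times the conjugate of `A_g(p,q)`, and every sign then occurs squared,
leaving `|A_g(p,q)|² - 1/d`. -/

section DeltaSums

lemma sum_ite_sub_mul_ite_sub_mul_ite_sub {ι R : Type*} [Fintype ι] [DecidableEq ι] [CommRing R]
    (a b e : ι) (c : R) :
    ∑ l : ι, ((if l = a then 1 else 0) - c) * ((if l = b then 1 else 0) - c) *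
        ((if l = e then 1 else 0) - c)
      = (if a = b then 1 else 0) * (if a = e then 1 else 0)
        - c * ((if a = b then 1 else 0) + (if a = e then 1 else 0) + (if b = e then 1 else 0))
        + 3 * c ^ 2 - Fintype.card ι * c ^ 3 := by
  have sum_delta_mul (r : ι) (F : ι → R) : ∑ l : ι, (if l = r then 1 else 0) * F l = F r := by simp
  calc
    _ = ∑ l : ι, ((if l = a then 1 else 0) *
            (((if l = b then 1 else 0) - c) * ((if l = e then 1 else 0) - c))
          + (if l = b then 1 else 0) * (-c * ((if l = e then 1 else 0) - c))
          + (if l = e then 1 else 0) * c ^ 2 - c ^ 3) :=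
      Finset.sum_congr rfl fun l _ => by ring
    _ = ((if a = b then 1 else 0) - c) * ((if a = e then 1 else 0) - c)
          + -c * ((if b = e then 1 else 0) - c) + c ^ 2 - Fintype.card ι * c ^ 3 := by
      rw [Finset.sum_sub_distrib, Finset.sum_add_distrib, Finset.sum_add_distrib,
        sum_delta_mul, sum_delta_mul, sum_delta_mul, Finset.sum_const, Finset.card_univ,
        nsmul_eq_mul]
    _ = _ := by ring

variable {K : Type*} [Field K] {d : K}

lemma ne_zero_of_sq_eq_mul_add_one {n : K} (hd : d ^ 2 = n * d + 1) : d ≠ 0 := by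
  rintro rfl
  simp at hd

lemma three_mul_sq_sub_mul_cube_of_sq_eq_mul_add_one {n : K} (hd1 : d - 1 ≠ 0)
    (hd : d ^ 2 = n * d + 1) :
    3 * (1 / (d - 1)) ^ 2 - n * (1 / (d - 1)) ^ 3 = d / (d - 1) ^ 2 - 1 / d := by
  have hd0 := ne_zero_of_sq_eq_mul_add_one hd
  field_simp
  linear_combination hd

lemma sum_ite_sub_one_div {ι : Type*} [Fintype ι] [DecidableEq ι] (hd1 : d - 1 ≠ 0)
    (hd : d ^ 2 = Fintype.card ι * d + 1) (a : ι) :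
    ∑ l : ι, ((if l = a then 1 else 0) - 1 / (d - 1)) = -1 / d := by
  have hd0 := ne_zero_of_sq_eq_mul_add_one hd
  rw [Finset.sum_sub_distrib, Fintype.sum_ite_eq', Finset.sum_const, Finset.card_univ,
    nsmul_eq_mul]
  field_simp
  linear_combination hd

lemma sum_translates_ite_sub_one_div {G : Type*} [AddGroup G] [Fintype G] [DecidableEq G]
    (hd1 : d - 1 ≠ 0) (hd : d ^ 2 = Fintype.card G * d + 1) (p q : G) :
    ∑ l : G, ((if l = 0 then 1 else 0) - 1 / (d - 1)) *
        ((if l + p = 0 then 1 else 0) - 1 / (d - 1)) * ((if l + q = 0 then 1 else 0) - 1 / (d - 1))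
      = (if p = 0 then 1 else 0) * (if q = 0 then 1 else 0)
        - ((if p = 0 then 1 else 0) + (if q = 0 then 1 else 0) + (if p = q then 1 else 0)) / (d - 1)
        + d / (d - 1) ^ 2 - 1 / d := by
  have hsum := sum_ite_sub_mul_ite_sub_mul_ite_sub (0 : G) (-p) (-q) (1 / (d - 1))
  simp only [zero_eq_neg, neg_inj] at hsum
  simp only [add_eq_zero_iff_eq_neg, hsum]
  linear_combination three_mul_sq_sub_mul_cube_of_sq_eq_mul_add_one hd1 hd

end DeltaSums

section PositiveRoot

variable (G : Type) [Fintype G]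

lemma dR_sq : dR G ^ 2 = Fintype.card G * dR G + 1 := by
  have hsqrt : √((Fintype.card G : ℝ) ^ 2 + 4) ^ 2 = (Fintype.card G : ℝ) ^ 2 + 4 :=
    Real.sq_sqrt (by positivity)
  unfold dR
  linear_combination hsqrt / 4

lemma dC_sq : dC G ^ 2 = Fintype.card G * dC G + 1 := by
  unfold dC
  exact_mod_cast dR_sq G

lemma one_lt_dR [Nonempty G] : 1 < dR G := by
  have hcard : (1 : ℝ) ≤ Fintype.card G := by exact_mod_cast Fintype.card_pos (α := G)
  have hsqrt : 1 < √((Fintype.card G : ℝ) ^ 2 + 4) := Real.lt_sqrt_of_sq_lt (by nlinarith)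
  unfold dR
  linarith

lemma dC_sub_one_ne_zero [Nonempty G] : dC G - 1 ≠ 0 := by
  unfold dC
  exact_mod_cast (sub_pos.2 (one_lt_dR G)).ne'

end PositiveRoot

section PolynomialEquations

variable {G : Type} {ε : G → G → ℂ} {η : G → ℂ} {A : G → G → G → ℂ}

lemma eta_eq_one_of_eq3 [Zero G] [Fintype G] [DecidableEq G]
    (eq3 : ∀ g : G, ∑ h : G, A g h 0 = -(starRingEnd ℂ) (η g) / dC G)
    (hQ : ∀ g h : G, A g h 0 = (if h = 0 then 1 else 0) - 1 / (dC G - 1)) (g : G) :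
    η g = 1 := by
  have hconj : -(starRingEnd ℂ) (η g) / dC G = -1 / dC G := by
    rw [← eq3, ← sum_ite_sub_one_div (dC_sub_one_ne_zero G) (dC_sq G) (0 : G)]
    exact Finset.sum_congr rfl fun h _ => hQ g h
  rw [div_left_inj' (ne_zero_of_sq_eq_mul_add_one (dC_sq G)), neg_inj] at hconj
  exact (map_eq_one_iff _ (starRingEnd ℂ).injective).1 hconj

lemma apply_zero_left_of_eq6 [Zero G] [Fintype G] [DecidableEq G]
    (eq6 : ∀ g h k : G, A g k h = (starRingEnd ℂ) (A g h k))
    (hQ : ∀ g h : G, A g h 0 = (if h = 0 then 1 else 0) - 1 / (dC G - 1)) (g h : G) :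
    A g 0 h = (if h = 0 then 1 else 0) - 1 / (dC G - 1) := by
  rw [eq6 g h 0, hQ, dC]
  split_ifs <;> simp

lemma apply_sub_swap_of_eq8b [AddGroup G] (hη : ∀ g, η g = 1)
    (eq6 : ∀ g h k : G, A g k h = (starRingEnd ℂ) (A g h k))
    (eq8b : ∀ g h k : G,
      A g h k = (starRingEnd ℂ) (η g) * (starRingEnd ℂ) (η (g + h)) * η (g + k) * η (g + h + k) *
        ε k g * ε k (g + h) * A (g + k) h k) (g p q : G) :
    A (g - p) q p = ε p (g - p) * ε p (g - p + q) * (starRingEnd ℂ) (A g p q) := by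
  rw [eq8b (g - p) q p, sub_add_cancel, eq6 g p q]
  simp only [hη, map_one, one_mul]

lemma eq9At_zero_zero_iff [AddCommGroup G] [Fintype G] [DecidableEq G]
    (eps_pm : ∀ h g : G, ε h g = 1 ∨ ε h g = -1) (hη : ∀ g, η g = 1) {g p q : G}
    (hswap : A (g - p) q p = ε p (g - p) * ε p (g - p + q) * (starRingEnd ℂ) (A g p q)) :
    Eq9At ε η A g p q 0 0 ↔
      ∑ l : G, A g 0 l * A (g - p) 0 (l + p) * A (g - q) 0 (l + q)
        = (‖A g p q‖ : ℂ) ^ 2 - 1 / dC G := by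
  have eps_sq (h g : G) : ε h g ^ 2 = 1 := sq_eq_one_iff.2 (eps_pm h g)
  have hsigns : ε p (g - p) * ε p (g - p + q) * ε q (g - q) * ε q (g - q) * A g p q *
      A (g - p) q p = (‖A g p q‖ : ℂ) ^ 2 := by
    calc
      _ = ε p (g - p) ^ 2 * ε p (g - p + q) ^ 2 * ε q (g - q) ^ 2 *
            (A g p q * (starRingEnd ℂ) (A g p q)) := by rw [hswap]; ring
      _ = _ := by simp only [eps_sq, one_mul, Complex.mul_conj']
  simp only [Eq9At, add_zero, neg_zero, hη, map_one, if_true, mul_one, one_mul, hsigns]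

theorem eq9_x_y_zero_iff_general [AddCommGroup G] [Fintype G] [DecidableEq G]
    (eps_pm : ∀ h g : G, ε h g = 1 ∨ ε h g = -1)
    (eq3 : ∀ g : G, ∑ h : G, A g h 0 = -(starRingEnd ℂ) (η g) / dC G)
    (eq6 : ∀ g h k : G, A g k h = (starRingEnd ℂ) (A g h k))
    (eq8b : ∀ g h k : G,
      A g h k = (starRingEnd ℂ) (η g) * (starRingEnd ℂ) (η (g + h)) * η (g + k) * η (g + h + k) *
        ε k g * ε k (g + h) * A (g + k) h k)
    (hQ : ∀ g h : G, A g h 0 = (if h = 0 then 1 else 0) - 1 / (dC G - 1)) (g p q : G) :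
    Eq9At ε η A g p q 0 0 ↔
      ‖A g p q‖ ^ 2
        = (if p = 0 then 1 else 0) * (if q = 0 then 1 else 0)
          - ((if p = 0 then 1 else 0) + (if q = 0 then 1 else 0) + (if p = q then 1 else 0)) /
              (dR G - 1)
          + dR G / (dR G - 1) ^ 2 := by
  have hη := eta_eq_one_of_eq3 eq3 hQ
  rw [eq9At_zero_zero_iff eps_pm hη (apply_sub_swap_of_eq8b hη eq6 eq8b g p q)]
  simp only [apply_zero_left_of_eq6 eq6 hQ]
  rw [sum_translates_ite_sub_one_div (dC_sub_one_ne_zero G) (dC_sq G), sub_left_inj, eq_comm,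
    ← Complex.ofReal_inj, dC]
  push_cast [apply_ite Complex.ofReal]
  rfl

end PolynomialEquations

/-- Under equations (1)–(8) and the `Q`-system condition `A_g(h,0) = δ_{h,0} − 1/(d−1)`,
the instance of equation (9) with `x = y = 0` is equivalent to
`|A_g(p,q)|² = δ_{p,0}·δ_{q,0} − (δ_{p,0}+δ_{q,0}+δ_{p,q})/(d−1) + d/(d−1)²`. -/
theorem eq9_x_y_zero_iff
    {G : Type} [AddCommGroup G] [Fintype G] [DecidableEq G]
    (ε : G → G → ℂ) (η : G → ℂ) (A : G → G → G → ℂ)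
    (hsol : PolyEqs1to8 ε η A)
    (hQ : ∀ g h : G, A g h 0 = (if h = (0 : G) then (1 : ℂ) else 0) - 1 / (dC G - 1)) :
    ∀ g p q : G,
      Eq9At ε η A g p q 0 0 ↔
        (‖A g p q‖ : ℝ) ^ 2
          = (if p = (0 : G) then (1 : ℝ) else 0) * (if q = (0 : G) then (1 : ℝ) else 0)
            - ((if p = (0 : G) then (1 : ℝ) else 0) + (if q = (0 : G) then (1 : ℝ) else 0)
                + (if p = q then (1 : ℝ) else 0)) / (dR G - 1)
            + dR G / (dR G - 1) ^ 2 := by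
  exact eq9_x_y_zero_iff_general hsol.eps_pm hsol.eq3 hsol.eq6 hsol.eq8b hQ
end

section
/- Let G be a finite abelian group of order n with d = (n+√(n²+4))/2, let (ε,η,A) be a solution of the polynomial equations for G, and set x_{g,h} := η_g·A_g(h,0) for g,h ∈ G. Then: (a) x_{g,h} is real and x_{g,h} = ε_{−h}(g)·A_g(−h,−h) = η_g⁻¹·A_g(0,h); (b) η_g·x_{g,0} = x_{g,0} (so η_g ≠ 1 implies x_{g,0} = 0); (c) x_{g+2l,h} = x_{g,h} = x_{g+h,h} for all l ∈ G; (d) Σ_{l∈G} x_{g,l} = −1/d; (e) Σ_{l∈G} x_{g,l−g}·x_{g',l−g'} = δ_{g,g'} − 1/d for all g,g' ∈ G; (f) Σ_{l∈G} x_{g,l}²·x_{g−h,l+h} = x_{g,h}² − 1/d for all g,h ∈ G. -/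
open scoped BigOperators
open Complex

/-- A solution of the polynomial equations (1)–(9) for a finite abelian group `G`. -/
structure PolySolution {G : Type} [AddCommGroup G] [Fintype G] [DecidableEq G]
    (ε : G → G → ℂ) (η : G → ℂ) (A : G → G → G → ℂ)
    extends PolyEqs1to8 ε η A : Prop where
  eq9 : ∀ g p q x y : G, Eq9At ε η A g p q x y

/-!
Each `η g` is a cube root of unity, so conjugation acts on it as inversion and as squaring.
Equation (7) at `k = 0` reads `A g h 0 = η g * A g 0 h`, hence `A g 0 h = η g * x` and
`A g h 0 = η g ^ 2 * x` with the same `x = η g * A g h 0`; equation (6) then says precisely that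
`x` is real. When the polynomial equations are specialised to a vanishing argument and rewritten
in terms of `x`, the signs `ε` occur in equal pairs and cancel, and the powers of `η` factor out
of the sums.
-/

/-- The numbers `x_{g,h} = η_g · A_g(h, 0)` attached to a triple `(ε, η, A)`. -/
def xCoeff {G : Type*} [Zero G] (η : G → ℂ) (A : G → G → G → ℂ) (g h : G) : ℂ :=
  η g * A g h 0

namespace PolyEqs1to8

open scoped ComplexConjugate

variable {G : Type} [AddCommGroup G] [Fintype G] [DecidableEq G]
  {ε : G → G → ℂ} {η : G → ℂ} {A : G → G → G → ℂ}

theorem eps_sq (S : PolyEqs1to8 ε η A) (h g : G) : ε h g ^ 2 = 1 :=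
  sq_eq_one_iff.mpr (S.eps_pm h g)

theorem eps_zero_left (S : PolyEqs1to8 ε η A) (g : G) : ε 0 g = 1 := by
  have idem : ε 0 g = ε 0 g ^ 2 := by simpa only [add_zero, ← sq] using S.eq1 g 0 0
  rw [idem, S.eps_sq]

theorem eta_ne_zero (S : PolyEqs1to8 ε η A) (g : G) : η g ≠ 0 :=
  ne_zero_pow three_ne_zero (S.eq2' g ▸ one_ne_zero)

theorem conj_eta (S : PolyEqs1to8 ε η A) (g : G) : conj (η g) = η g ^ 2 := by
  rw [← Complex.inv_eq_conj (norm_eq_one_of_pow_eq_one (S.eq2' g) three_ne_zero)]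
  exact inv_eq_of_mul_eq_one_right (by rw [← pow_succ', S.eq2'])

theorem eta_sub (S : PolyEqs1to8 ε η A) (g h : G) : η (g - h) = η (g + h) := by
  simpa only [sub_add_cancel] using (S.eq2 (g - h) h).symm

theorem apply_right_zero (S : PolyEqs1to8 ε η A) (g h : G) :
    A g h 0 = η g ^ 2 * xCoeff η A g h := by
  rw [xCoeff]
  linear_combination -A g h 0 * S.eq2' g

theorem apply_left_zero (S : PolyEqs1to8 ε η A) (g h : G) :
    A g 0 h = η g * xCoeff η A g h := by
  have rotate : A g h 0 = η g * A g 0 h := by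
    simpa only [neg_zero, sub_zero, S.eps_zero_left, mul_one] using S.eq7a g h 0
  rw [xCoeff, rotate]
  linear_combination -A g 0 h * S.eq2' g

theorem conj_xCoeff (S : PolyEqs1to8 ε η A) (g h : G) :
    conj (xCoeff η A g h) = xCoeff η A g h := by
  calc conj (xCoeff η A g h) = η g ^ 2 * A g 0 h := by
        rw [xCoeff, map_mul, S.conj_eta, ← S.eq6]
    _ = xCoeff η A g h := by
        rw [S.apply_left_zero]
        linear_combination xCoeff η A g h * S.eq2' g

theorem xCoeff_eq_inv_mul (S : PolyEqs1to8 ε η A) (g h : G) :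
    xCoeff η A g h = (η g)⁻¹ * A g 0 h := by
  rw [S.apply_left_zero, inv_mul_cancel_left₀ (S.eta_ne_zero g)]

theorem xCoeff_eq_eps_mul (S : PolyEqs1to8 ε η A) (g h : G) :
    xCoeff η A g h = ε (-h) g * A g (-h) (-h) := by
  have rotate := S.eq7a g 0 h
  rw [S.apply_left_zero, add_zero, zero_sub] at rotate
  refine mul_left_cancel₀ (S.eta_ne_zero g) ?_
  linear_combination rotate + η g * ε (-h) g * A g (-h) (-h) * S.eps_sq (-h) (g + h)

theorem eta_mul_xCoeff_zero (S : PolyEqs1to8 ε η A) (g : G) :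
    η g * xCoeff η A g 0 = xCoeff η A g 0 := by
  rw [← S.apply_left_zero, S.xCoeff_eq_eps_mul, neg_zero, S.eps_zero_left, one_mul]

theorem xCoeff_zero_of_eta_ne_one (S : PolyEqs1to8 ε η A) {g : G} (hg : η g ≠ 1) :
    xCoeff η A g 0 = 0 := by
  by_contra hx
  exact hg ((mul_eq_right₀ hx).mp (S.eta_mul_xCoeff_zero g))

theorem xCoeff_add_add_self (S : PolyEqs1to8 ε η A) (g h l : G) :
    xCoeff η A (g + l + l) h = xCoeff η A g h := by
  have shift : A (g + l + l) h 0 = A g h 0 := by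
    calc A (g + l + l) h 0 = ε l g ^ 2 * ε l (g + h) ^ 2 * A g h 0 := by
          rw [S.eq5, add_zero, add_zero]
          ring
      _ = A g h 0 := by rw [S.eps_sq, S.eps_sq, one_mul, one_mul]
  rw [xCoeff, xCoeff, S.eq2, shift]

theorem xCoeff_add_left (S : PolyEqs1to8 ε η A) (g h : G) :
    xCoeff η A (g + h) h = xCoeff η A g h := by
  have shift : A g h 0 = η g ^ 2 * η (g + h) ^ 4 * A (g + h) h 0 := by
    have eq8 := S.eq8a g h 0
    simp only [add_zero, S.conj_eta] at eq8
    linear_combination eq8 + η g ^ 2 * η (g + h) ^ 4 * A (g + h) h 0 * S.eps_sq h g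
  symm
  calc xCoeff η A g h = η g ^ 3 * η (g + h) ^ 3 * xCoeff η A (g + h) h := by
        rw [xCoeff, shift, xCoeff]
        ring
    _ = xCoeff η A (g + h) h := by rw [S.eq2', S.eq2', one_mul, one_mul]

theorem sum_xCoeff (S : PolyEqs1to8 ε η A) (g : G) :
    ∑ l : G, xCoeff η A g l = -1 / dC G := by
  calc ∑ l : G, xCoeff η A g l = η g * (-η g ^ 2 / dC G) := by
        simp only [xCoeff]
        rw [← Finset.mul_sum, S.eq3, S.conj_eta]
    _ = -1 / dC G := by linear_combination (-1 / dC G) * S.eq2' g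

theorem sum_xCoeff_mul_xCoeff (S : PolyEqs1to8 ε η A) (g g' : G) :
    ∑ l : G, xCoeff η A g (l - g) * xCoeff η A g' (l - g')
      = (if g = g' then (1 : ℂ) else 0) - 1 / dC G := by
  have phase (l : G) : xCoeff η A g (l - g) * xCoeff η A g' (l - g')
      = η g * η g' ^ 2 * (A g (l - g) 0 * conj (A g' (l - g') 0)) := by
    rw [← S.conj_xCoeff g' (l - g'), xCoeff, xCoeff, map_mul, S.conj_eta]
    ring
  have cancel : η g ^ 3 * η g' ^ 3 = 1 := by rw [S.eq2', S.eq2', one_mul]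
  simp only [phase]
  rw [← Finset.mul_sum, S.eq4, if_pos rfl, S.conj_eta]
  split_ifs with hg
  · subst hg
    linear_combination S.eq2' g - cancel / dC G
  · linear_combination -cancel / dC G

theorem sum_xCoeff_sq_mul_xCoeff (S : PolyEqs1to8 ε η A) {g h : G}
    (eq9 : Eq9At ε η A g 0 h 0 0) :
    ∑ l : G, xCoeff η A g l ^ 2 * xCoeff η A (g - h) (l + h)
      = xCoeff η A g h ^ 2 - 1 / dC G := by
  have phase (l : G) : A g 0 l * A g 0 l * A (g - h) 0 (l + h)
      = η g ^ 2 * η (g + h) * (xCoeff η A g l ^ 2 * xCoeff η A (g - h) (l + h)) := by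
    rw [S.apply_left_zero, S.apply_left_zero, S.eta_sub]
    ring
  simp only [Eq9At, add_zero, sub_zero, neg_zero, if_true, one_mul, mul_one,
    S.eps_zero_left, phase, ← Finset.mul_sum, S.conj_eta] at eq9
  rw [S.apply_left_zero, S.apply_right_zero] at eq9
  have hη : η g ^ 2 * η (g + h) ≠ 0 :=
    mul_ne_zero (pow_ne_zero 2 (S.eta_ne_zero g)) (S.eta_ne_zero (g + h))
  have cancel : η g ^ 6 * η (g + h) ^ 3 * ε h (g - h) ^ 2 = 1 := by
    rw [pow_mul (η g) 3 2, S.eq2', S.eq2', S.eps_sq]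
    norm_num
  refine mul_left_cancel₀ hη ?_
  linear_combination eq9 + η g ^ 2 * η (g + h) * xCoeff η A g h ^ 2 * cancel

end PolyEqs1to8

/-- Properties of `x_{g,h} := η_g·A_g(h,0)` for a solution of the polynomial equations. -/
theorem x_properties
    {G : Type} [AddCommGroup G] [Fintype G] [DecidableEq G]
    (ε : G → G → ℂ) (η : G → ℂ) (A : G → G → G → ℂ)
    (hsol : PolySolution ε η A)
    (x : G → G → ℂ) (hx : ∀ g h : G, x g h = η g * A g h 0) :
    (∀ g h : G, (x g h).im = 0) ∧
    (∀ g h : G, x g h = ε (-h) g * A g (-h) (-h)) ∧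
    (∀ g h : G, x g h = (η g)⁻¹ * A g 0 h) ∧
    (∀ g : G, η g * x g 0 = x g 0) ∧
    (∀ g : G, η g ≠ 1 → x g 0 = 0) ∧
    (∀ g h l : G, x (g + l + l) h = x g h) ∧
    (∀ g h : G, x g h = x (g + h) h) ∧
    (∀ g : G, ∑ l : G, x g l = -1 / dC G) ∧
    (∀ g g' : G, ∑ l : G, x g (l - g) * x g' (l - g')
      = (if g = g' then (1 : ℂ) else 0) - 1 / dC G) ∧
    (∀ g h : G, ∑ l : G, (x g l) ^ 2 * x (g - h) (l + h) = (x g h) ^ 2 - 1 / dC G) := by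
  obtain rfl : x = xCoeff η A := funext₂ hx
  have S := hsol.toPolyEqs1to8
  exact ⟨fun g h => Complex.conj_eq_iff_im.mp (S.conj_xCoeff g h),
    S.xCoeff_eq_eps_mul,
    S.xCoeff_eq_inv_mul,
    S.eta_mul_xCoeff_zero,
    fun _ => S.xCoeff_zero_of_eta_ne_one,
    S.xCoeff_add_add_self,
    fun g h => (S.xCoeff_add_left g h).symm,
    S.sum_xCoeff,
    S.sum_xCoeff_mul_xCoeff,
    fun g h => S.sum_xCoeff_sq_mul_xCoeff (hsol.eq9 g 0 h 0 0)⟩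
end
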